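/- Suppose the problem is smooth and unconstrained, i.e., h_k ≡ 0 and X_k = ℝ^N for all k, each A_k is nonzero, and the cyclic BCPG (i.e., BCGD) stepsize parameters are P_k = L_k. Then for all r ≥ 0, Δ^{(r+1)} := f(x^{(r+1)}) − f* ≤ 3 · max{ L, 2 log²(2NK) · (L_max + L²/L_min) } · R_0² / (r+1). -/

import Mathlib

open Finset

/-- Squared Euclidean norm of a vector in `ℝ^n`. -/
noncomputable def sqnorm {n : ℕ} (v : Fin n → ℝ) : ℝ := ∑ i, v i ^ 2

/-- Euclidean inner product on `ℝ^n`. -/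
noncomputable def dotp {n : ℕ} (u v : Fin n → ℝ) : ℝ := ∑ i, u i * v i

/-- `λ_max(AᵀA)` for a real matrix `A`, characterized as the maximum of `‖Av‖²`
over unit vectors `v`. -/
noncomputable def lamMaxQ {M N : ℕ} (A : Matrix (Fin M) (Fin N) ℝ) : ℝ :=
  sSup {r : ℝ | ∃ v : Fin N → ℝ, sqnorm v = 1 ∧ r = sqnorm (A.mulVec v)}

/-- `λ_min(AᵀA)` for a real matrix `A`, characterized as the minimum of `‖Av‖²`
over unit vectors `v`. -/
noncomputable def lamMinQ {M N : ℕ} (A : Matrix (Fin M) (Fin N) ℝ) : ℝ :=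
  sInf {r : ℝ | ∃ v : Fin N → ℝ, sqnorm v = 1 ∧ r = sqnorm (A.mulVec v)}

/-- `λ_max(AᵀA)` for the concatenated matrix `A = [A_1 ⋯ A_K]`, acting on block
vectors. -/
noncomputable def lamMaxBlock {K M N : ℕ} (A : Fin K → Matrix (Fin M) (Fin N) ℝ) : ℝ :=
  sSup {r : ℝ | ∃ v : Fin K → Fin N → ℝ, (∑ k, sqnorm (v k)) = 1 ∧
    r = sqnorm (∑ k, (A k).mulVec (v k))}

/-- Maximum of a finite family of reals indexed by `Fin K`, `K ≥ 1`. -/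
noncomputable def maxOf {K : ℕ} (hK : 1 ≤ K) (P : Fin K → ℝ) : ℝ :=
  Finset.univ.sup' (Finset.univ_nonempty_iff.mpr ⟨⟨0, hK⟩⟩) P

/-- Minimum of a finite family of reals indexed by `Fin K`, `K ≥ 1`. -/
noncomputable def minOf {K : ℕ} (hK : 1 ≤ K) (P : Fin K → ℝ) : ℝ :=
  Finset.univ.inf' (Finset.univ_nonempty_iff.mpr ⟨⟨0, hK⟩⟩) P

/-- The residual `Σ_k A_k x_k − b`. -/
noncomputable def resid {K M N : ℕ} (A : Fin K → Matrix (Fin M) (Fin N) ℝ)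
    (b : Fin M → ℝ) (x : Fin K → Fin N → ℝ) : Fin M → ℝ :=
  (∑ k, (A k).mulVec (x k)) - b

/-- The smooth part `g(x) = (1/2)‖Σ_k A_k x_k − b‖²`. -/
noncomputable def gq {K M N : ℕ} (A : Fin K → Matrix (Fin M) (Fin N) ℝ)
    (b : Fin M → ℝ) (x : Fin K → Fin N → ℝ) : ℝ :=
  (1 / 2) * sqnorm (resid A b x)

/-- The objective `f(x) = g(x) + Σ_k h_k(x_k)`. -/
noncomputable def fq {K M N : ℕ} (A : Fin K → Matrix (Fin M) (Fin N) ℝ)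
    (b : Fin M → ℝ) (h : Fin K → (Fin N → ℝ) → ℝ) (x : Fin K → Fin N → ℝ) : ℝ :=
  gq A b x + ∑ k, h k (x k)

/-- The partial gradient `∇_k g(x) = A_kᵀ (Σ_j A_j x_j − b)`. -/
noncomputable def gradk {K M N : ℕ} (A : Fin K → Matrix (Fin M) (Fin N) ℝ)
    (b : Fin M → ℝ) (x : Fin K → Fin N → ℝ) (k : Fin K) : Fin N → ℝ :=
  ((A k).transpose).mulVec (resid A b x)

/-- The intermediate point `w_k^{(r+1)}` of the cycle: blocks `j < k` come from
`x^{(r+1)} = xp`, the remaining blocks from `x^{(r)} = x`. -/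
def wpt {K N : ℕ} (x xp : Fin K → Fin N → ℝ) (k : Fin K) : Fin K → Fin N → ℝ :=
  fun j => if j < k then xp j else x j

/-- The objective of the `k`-th BCPG prox subproblem at the point
`w_k^{(r+1)} = wpt x xp k`, evaluated at candidate block `y`. -/
noncomputable def bcpgObj {K M N : ℕ} (A : Fin K → Matrix (Fin M) (Fin N) ℝ)
    (b : Fin M → ℝ) (h : Fin K → (Fin N → ℝ) → ℝ) (P : Fin K → ℝ)
    (x xp : Fin K → Fin N → ℝ) (k : Fin K) (y : Fin N → ℝ) : ℝ :=
  dotp (gradk A b (wpt x xp k) k) (y - x k) + (P k / 2) * sqnorm (y - x k) + h k y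

/-- One cycle of cyclic BCPG: `xp = x^{(r+1)}` is obtained from `x = x^{(r)}`
by letting, for `k = 1,…,K`, the `k`-th block minimize the prox subproblem at
`w_k^{(r+1)}` over `X_k`. -/
def BCPGStep {K M N : ℕ} (A : Fin K → Matrix (Fin M) (Fin N) ℝ)
    (b : Fin M → ℝ) (h : Fin K → (Fin N → ℝ) → ℝ)
    (X : Fin K → Set (Fin N → ℝ)) (P : Fin K → ℝ)
    (x xp : Fin K → Fin N → ℝ) : Prop :=
  ∀ k : Fin K, xp k ∈ X k ∧ ∀ y ∈ X k,
    bcpgObj A b h P x xp k (xp k) ≤ bcpgObj A b h P x xp k y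

/-- One cycle of cyclic exact BCD: `xp = x^{(r+1)}` is obtained from
`x = x^{(r)}` by letting, for `k = 1,…,K`, the `k`-th block minimize
`f(x_1^{(r+1)},…,x_{k−1}^{(r+1)}, ·, x_{k+1}^{(r)},…,x_K^{(r)})` over `X_k`. -/
def BCDStep {K M N : ℕ} (A : Fin K → Matrix (Fin M) (Fin N) ℝ)
    (b : Fin M → ℝ) (h : Fin K → (Fin N → ℝ) → ℝ)
    (X : Fin K → Set (Fin N → ℝ))
    (x xp : Fin K → Fin N → ℝ) : Prop :=
  ∀ k : Fin K, xp k ∈ X k ∧ ∀ y ∈ X k,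
    fq A b h (Function.update (wpt x xp k) k (xp k)) ≤
      fq A b h (Function.update (wpt x xp k) k y)

/-!
Write `d = y - x` for one cycle `x ↦ y` and `z` for a comparison point. Block `k` sees the gradient
at `x` corrected by the strictly block lower triangular part `Λ` of `AᵀA` applied to `d`, so the
cycle is the linear system `∇g(x) = -(diag P + Λ) d`. Testing it with `d` gives the descent
`g(x) - g(y) ≥ ½ ∑ P_k ‖d_k‖²`; testing it with `z - x` and using convexity gives
`g(x) - g(z) ≤ ⟨diag P d, z - x⟩ + ⟨z - x, Λ d⟩`. The triangular truncation `Λ` of `AᵀA` has norm at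
most `½ ⌈log₂ K⌉ λ_max(AᵀA)`: halving the index set writes it as `⌈log₂ K⌉` layers of off-diagonal
blocks. By Cauchy–Schwarz the squared gap is then at most a constant times the decrease over the
cycle, which forces the rate `1 / r`.
-/

section TriangularTruncation

variable {ι : Type*} [LinearOrder ι]

lemma exists_union_forall_lt_card_le (S : Finset ι) {p q : ℕ} (hS : #S ≤ p + q) :
    ∃ T U : Finset ι, T ∪ U = S ∧ (∀ j ∈ T, ∀ k ∈ U, j < k) ∧ #T ≤ p ∧ #U ≤ q := by
  induction S using Finset.induction_on_max generalizing q with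
  | empty => exact ⟨∅, ∅, by simp⟩
  | insert a S ha ih =>
    cases q with
    | zero => exact ⟨insert a S, ∅, by simpa using hS⟩
    | succ q =>
      rw [card_insert_of_notMem fun h => (ha a h).false] at hS
      obtain ⟨T, U, rfl, hlt, hT, hU⟩ := ih (q := q) (by omega)
      refine ⟨T, insert a U, union_insert _ _ _, fun j hj k hk => ?_, hT,
        (card_insert_le _ _).trans (by omega)⟩
      rcases mem_insert.1 hk with rfl | hk
      · exact ha j (mem_union_left _ hj)
      · exact hlt j hj k hk

lemma sum_sum_filter_lt_union {M : Type*} [AddCommMonoid M] {T U : Finset ι}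
    (hlt : ∀ j ∈ T, ∀ k ∈ U, j < k) (B : ι → ι → M) :
    ∑ k ∈ T ∪ U, ∑ j ∈ T ∪ U with j < k, B k j =
      ∑ k ∈ T, ∑ j ∈ T with j < k, B k j + ∑ k ∈ U, ∑ j ∈ U with j < k, B k j +
        ∑ k ∈ U, ∑ j ∈ T, B k j := by
  have hdisj : Disjoint T U := disjoint_left.2 fun j hT hU => (hlt j hT j hU).false
  have row_T : ∀ k ∈ T, ∑ j ∈ T ∪ U with j < k, B k j = ∑ j ∈ T with j < k, B k j := by
    intro k hk
    rw [filter_union, filter_false_of_mem fun j hj => (hlt k hk j hj).not_gt, union_empty]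
  have row_U : ∀ k ∈ U, ∑ j ∈ T ∪ U with j < k, B k j =
      ∑ j ∈ U with j < k, B k j + ∑ j ∈ T, B k j := by
    intro k hk
    rw [filter_union, filter_true_of_mem fun j hj => hlt j hj k hk,
      sum_union (hdisj.mono_right (filter_subset _ _)), add_comm]
  rw [sum_union hdisj, sum_congr rfl row_T, sum_congr rfl row_U, sum_add_distrib, add_assoc]

lemma sum_sum_filter_lt_le_of_card_le_two_pow {B : ι → ι → ℝ} {α γ : ι → ℝ}
    (hα : ∀ k, 0 ≤ α k) (hγ : ∀ k, 0 ≤ γ k)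
    (hB : ∀ S T : Finset ι, Disjoint S T →
      ∑ k ∈ S, ∑ j ∈ T, B k j ≤ ∑ k ∈ S, α k + ∑ j ∈ T, γ j)
    {m : ℕ} {S : Finset ι} (hS : #S ≤ 2 ^ m) :
    ∑ k ∈ S, ∑ j ∈ S with j < k, B k j ≤ m * ∑ k ∈ S, (α k + γ k) := by
  induction m generalizing S with
  | zero =>
    have no_pair : ∀ k ∈ S, {j ∈ S | j < k} = ∅ := fun k hk =>
      filter_false_of_mem fun j hj => (card_le_one.1 hS j hj k hk).not_lt
    rw [sum_congr rfl fun k hk => by rw [no_pair k hk, sum_empty]]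
    simp
  | succ m ih =>
    obtain ⟨T, U, rfl, hlt, hT, hU⟩ :=
      exists_union_forall_lt_card_le S (p := 2 ^ m) (q := 2 ^ m) (by omega)
    have hdisj : Disjoint T U := disjoint_left.2 fun j hT hU => (hlt j hT j hU).false
    have off_diagonal := hB U T hdisj.symm
    have diagonal_T := ih hT
    have diagonal_U := ih hU
    have hαT : 0 ≤ ∑ k ∈ T, α k := sum_nonneg fun k _ => hα k
    have hγU : 0 ≤ ∑ k ∈ U, γ k := sum_nonneg fun k _ => hγ k
    rw [sum_sum_filter_lt_union hlt, sum_union hdisj]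
    simp only [sum_add_distrib] at diagonal_T diagonal_U ⊢
    push_cast
    linarith

lemma sum_sum_eq_two_mul_sum_filter_lt_add_diag {R : Type*} [CommSemiring R] [Fintype ι]
    {B : ι → ι → R} (hB : ∀ j k, B j k = B k j) :
    ∑ k, ∑ j, B k j = 2 * ∑ k, ∑ j with j < k, B k j + ∑ k, B k k := by
  have upper : ∑ k, ∑ j with k < j, B k j = ∑ k, ∑ j with j < k, B k j := by
    simp only [sum_filter]
    rw [sum_comm]
    simp only [hB]
  have row : ∀ k, ∑ j, B k j = ∑ j with j < k, B k j + ∑ j with k < j, B k j + B k k := by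
    intro k
    have not_lt_filter : ({j | ¬ j < k} : Finset ι) = insert k ({j | k < j} : Finset ι) := by
      ext j
      simp [le_iff_eq_or_lt, eq_comm]
    rw [← sum_filter_add_sum_filter_not univ (· < k) (B k), not_lt_filter,
      sum_insert (by simp), add_comm (B k k), add_assoc]
  rw [sum_congr rfl fun k _ => row k, sum_add_distrib, sum_add_distrib, upper, two_mul]

end TriangularTruncation

section SquaredNorm

variable {n : ℕ}

lemma sqnorm_eq_dotProduct (v : Fin n → ℝ) : sqnorm v = v ⬝ᵥ v := by
  simp only [sqnorm, dotProduct, sq]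

lemma sqnorm_nonneg (v : Fin n → ℝ) : 0 ≤ sqnorm v :=
  sum_nonneg fun i _ => sq_nonneg (v i)

lemma sqnorm_smul (c : ℝ) (v : Fin n → ℝ) : sqnorm (c • v) = c ^ 2 * sqnorm v := by
  simp only [sqnorm, Pi.smul_apply, smul_eq_mul, mul_pow, mul_sum]

lemma sqnorm_sub_comm (u v : Fin n → ℝ) : sqnorm (u - v) = sqnorm (v - u) := by
  simp only [sqnorm, Pi.sub_apply, sub_sq_comm]

lemma sqnorm_add (u v : Fin n → ℝ) : sqnorm (u + v) = sqnorm u + 2 * (u ⬝ᵥ v) + sqnorm v := by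
  simp only [sqnorm_eq_dotProduct, add_dotProduct, dotProduct_add, dotProduct_comm v u]
  ring

lemma dotProduct_sq_le_sqnorm_mul_sqnorm (u v : Fin n → ℝ) :
    (u ⬝ᵥ v) ^ 2 ≤ sqnorm u * sqnorm v :=
  sum_mul_sq_le_sq_mul_sq univ u v

lemma four_mul_dotProduct_le_sqnorm_add (u v : Fin n → ℝ) : 4 * (u ⬝ᵥ v) ≤ sqnorm (u + v) := by
  have h := sqnorm_nonneg (u + (-1 : ℝ) • v)
  rw [sqnorm_add, sqnorm_smul, dotProduct_smul, smul_eq_mul] at h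
  rw [sqnorm_add]
  linarith

lemma sq_sum_mul_dotProduct_le {ι : Type*} (s : Finset ι) {P : ι → ℝ} {ν : ℝ}
    (hP : ∀ k ∈ s, 0 ≤ P k) (hPν : ∀ k ∈ s, P k ≤ ν) (u v : ι → Fin n → ℝ) :
    (∑ k ∈ s, P k * (u k ⬝ᵥ v k)) ^ 2 ≤
      ν * (∑ k ∈ s, sqnorm (u k)) * ∑ k ∈ s, P k * sqnorm (v k) := by
  have hν : ∀ k ∈ s, 0 ≤ ν := fun k hk => (hP k hk).trans (hPν k hk)
  rw [mul_sum s _ ν]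
  refine sum_sq_le_sum_mul_sum_of_sq_le_mul s
    (fun k hk => mul_nonneg (hν k hk) (sqnorm_nonneg _))
    (fun k hk => mul_nonneg (hP k hk) (sqnorm_nonneg _)) fun k hk => ?_
  calc (P k * (u k ⬝ᵥ v k)) ^ 2 = P k * (P k * (u k ⬝ᵥ v k) ^ 2) := by ring
    _ ≤ ν * (P k * (sqnorm (u k) * sqnorm (v k))) := by
      have := hP k hk
      have := hν k hk
      gcongr
      exacts [hPν k hk, dotProduct_sq_le_sqnorm_mul_sqnorm _ _]
    _ = ν * sqnorm (u k) * (P k * sqnorm (v k)) := by ring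

end SquaredNorm

section LargestEigenvalue

open scoped Matrix

variable {K M N : ℕ}

lemma quadratic_le_sSup_mul {E : Type*} [AddCommGroup E] [Module ℝ E] {q n : E → ℝ}
    (hq : ∀ (c : ℝ) v, q (c • v) = c ^ 2 * q v) (hn : ∀ (c : ℝ) v, n (c • v) = c ^ 2 * n v)
    (hn_nonneg : ∀ v, 0 ≤ n v) {C : ℝ} (hC : ∀ v, q v ≤ C * n v) (v : E) :
    q v ≤ sSup {r : ℝ | ∃ v : E, n v = 1 ∧ r = q v} * n v := by
  rcases (hn_nonneg v).eq_or_lt with hv | hv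
  · simpa [← hv] using hC v
  have bdd : BddAbove {r : ℝ | ∃ v : E, n v = 1 ∧ r = q v} := by
    refine ⟨C, ?_⟩
    rintro _ ⟨w, hw, rfl⟩
    simpa [hw] using hC w
  have scale : (√(n v))⁻¹ ^ 2 = (n v)⁻¹ := by rw [inv_pow, Real.sq_sqrt hv.le]
  have normalized : q ((√(n v))⁻¹ • v) ≤ sSup {r : ℝ | ∃ v : E, n v = 1 ∧ r = q v} :=
    le_csSup bdd ⟨_, by rw [hn, scale, inv_mul_cancel₀ hv.ne'], rfl⟩
  rwa [hq, scale, inv_mul_le_iff₀ hv, mul_comm] at normalized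

lemma sum_mulVec_sq_le_frobenius_mul {m n : Type*} [Fintype m] [Fintype n] (A : Matrix m n ℝ)
    (v : n → ℝ) : ∑ i, (A *ᵥ v) i ^ 2 ≤ (∑ i, ∑ j, A i j ^ 2) * ∑ j, v j ^ 2 := by
  rw [sum_mul]
  exact sum_le_sum fun i _ => sum_mul_sq_le_sq_mul_sq univ (A i) v

lemma sqnorm_mulVec_le_lamMaxQ_mul (A : Matrix (Fin M) (Fin N) ℝ) (v : Fin N → ℝ) :
    sqnorm (A *ᵥ v) ≤ lamMaxQ A * sqnorm v :=
  quadratic_le_sSup_mul (q := fun v => sqnorm (A *ᵥ v))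
    (fun c v => by rw [Matrix.mulVec_smul, sqnorm_smul]) sqnorm_smul sqnorm_nonneg
    (sum_mulVec_sq_le_frobenius_mul A) v

lemma lamMaxQ_pos {A : Matrix (Fin M) (Fin N) ℝ} (hA : A ≠ 0) : 0 < lamMaxQ A := by
  contrapose! hA
  ext i j
  have column : sqnorm (A *ᵥ Pi.single j 1) ≤ 0 :=
    (sqnorm_mulVec_le_lamMaxQ_mul A _).trans
      (mul_nonpos_of_nonpos_of_nonneg hA (sqnorm_nonneg _))
  have entry : A i j ^ 2 ≤ sqnorm (A *ᵥ Pi.single j 1) := by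
    simpa [sqnorm] using
      single_le_sum (f := fun i => A i j ^ 2) (fun i _ => sq_nonneg _) (mem_univ i)
  exact (sq_nonpos_iff _).1 (entry.trans column)

lemma lamMaxBlock_nonneg (A : Fin K → Matrix (Fin M) (Fin N) ℝ) : 0 ≤ lamMaxBlock A := by
  refine Real.sSup_nonneg ?_
  rintro _ ⟨v, -, rfl⟩
  exact sqnorm_nonneg _

lemma sqnorm_sum_mulVec_le_lamMaxBlock_mul (A : Fin K → Matrix (Fin M) (Fin N) ℝ)
    (v : Fin K → Fin N → ℝ) :
    sqnorm (∑ k, A k *ᵥ v k) ≤ lamMaxBlock A * ∑ k, sqnorm (v k) := by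
  refine quadratic_le_sSup_mul (q := fun v : Fin K → Fin N → ℝ => sqnorm (∑ k, A k *ᵥ v k))
    (n := fun v => ∑ k, sqnorm (v k)) (C := ∑ i, ∑ p : Fin K × Fin N, A p.1 i p.2 ^ 2)
    (fun c v => ?_) (fun c v => ?_) (fun v => sum_nonneg fun k _ => sqnorm_nonneg _) (fun v => ?_) v
  · simp only [Pi.smul_apply, Matrix.mulVec_smul, ← smul_sum, sqnorm_smul]
  · simp only [Pi.smul_apply, sqnorm_smul, mul_sum]
  · simpa [sqnorm, Matrix.mulVec, dotProduct, Fintype.sum_prod_type] using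
      sum_mulVec_sq_le_frobenius_mul (Matrix.of fun i (p : Fin K × Fin N) => A p.1 i p.2)
        (fun p => v p.1 p.2)

lemma sqnorm_sum_mulVec_le_lamMaxBlock_mul_of_finset (A : Fin K → Matrix (Fin M) (Fin N) ℝ)
    (S : Finset (Fin K)) (v : Fin K → Fin N → ℝ) :
    sqnorm (∑ k ∈ S, A k *ᵥ v k) ≤ lamMaxBlock A * ∑ k ∈ S, sqnorm (v k) := by
  have h := sqnorm_sum_mulVec_le_lamMaxBlock_mul A (S.piecewise v 0)
  have image : ∀ k, A k *ᵥ S.piecewise v 0 k = if k ∈ S then A k *ᵥ v k else 0 := by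
    intro k
    split_ifs with hk <;> simp [hk]
  have norm : ∀ k, sqnorm (S.piecewise v 0 k) = if k ∈ S then sqnorm (v k) else 0 := by
    intro k
    split_ifs with hk <;> simp [hk, sqnorm]
  simpa only [image, norm, sum_ite_mem, univ_inter] using h

lemma lamMaxQ_le_lamMaxBlock (A : Fin K → Matrix (Fin M) (Fin N) ℝ) (k : Fin K) :
    lamMaxQ (A k) ≤ lamMaxBlock A := by
  refine Real.sSup_le ?_ (lamMaxBlock_nonneg A)
  rintro _ ⟨v, hv, rfl⟩
  simpa [hv] using sqnorm_sum_mulVec_le_lamMaxBlock_mul_of_finset A {k} fun _ => v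

end LargestEigenvalue

section BlockLowerForm

open scoped Matrix

variable {K M N : ℕ}

/-- The bilinear form `⟨u, Λ v⟩`, where `Λ` is the strictly block lower triangular part of `AᵀA`.
It measures how much the updates made earlier in a cycle perturb the gradients seen later. -/
noncomputable def blockLowerForm (A : Fin K → Matrix (Fin M) (Fin N) ℝ)
    (u v : Fin K → Fin N → ℝ) : ℝ :=
  ∑ k, ∑ j with j < k, (A k *ᵥ u k) ⬝ᵥ (A j *ᵥ v j)

variable (A : Fin K → Matrix (Fin M) (Fin N) ℝ) (u v : Fin K → Fin N → ℝ)

lemma blockLowerForm_smul_right (t : ℝ) :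
    blockLowerForm A u (t • v) = t * blockLowerForm A u v := by
  simp only [blockLowerForm, Pi.smul_apply, Matrix.mulVec_smul, dotProduct_smul, smul_eq_mul,
    mul_sum]

lemma sqnorm_sum_mulVec_eq_two_mul_blockLowerForm_add :
    sqnorm (∑ k, A k *ᵥ v k) = 2 * blockLowerForm A v v + ∑ k, sqnorm (A k *ᵥ v k) := by
  simp only [sqnorm_eq_dotProduct, sum_dotProduct, blockLowerForm]
  simp only [dotProduct_sum]
  exact sum_sum_eq_two_mul_sum_filter_lt_add_diag
    (B := fun k j => (A k *ᵥ v k) ⬝ᵥ (A j *ᵥ v j)) fun j k => dotProduct_comm _ _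

-- Disjointness lets both sums be read off a single block vector, so that `4⟨p, q⟩ ≤ ‖p + q‖²` gains
-- a factor 2 over bounding `‖p‖` and `‖q‖` separately.
lemma sum_dotProduct_mulVec_le_of_disjoint {S T : Finset (Fin K)} (hST : Disjoint S T) :
    ∑ k ∈ S, ∑ j ∈ T, (A k *ᵥ u k) ⬝ᵥ (A j *ᵥ v j) ≤
      ∑ k ∈ S, lamMaxBlock A / 4 * sqnorm (u k) + ∑ j ∈ T, lamMaxBlock A / 4 * sqnorm (v j) := by
  have glue : ∀ {E : Type} [AddCommMonoid E] (F : Fin K → (Fin N → ℝ) → E),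
      ∑ k ∈ S ∪ T, F k (S.piecewise u v k) = ∑ k ∈ S, F k (u k) + ∑ k ∈ T, F k (v k) := by
    intro E _ F
    rw [sum_union hST]
    congr 1 <;> refine sum_congr rfl fun k hk => ?_
    · rw [piecewise_eq_of_mem _ _ _ hk]
    · rw [piecewise_eq_of_notMem _ _ _ (disjoint_right.1 hST hk)]
  have spectral := sqnorm_sum_mulVec_le_lamMaxBlock_mul_of_finset A (S ∪ T) (S.piecewise u v)
  rw [glue fun k w => A k *ᵥ w, glue fun _ w => sqnorm w] at spectral
  simp only [← dotProduct_sum, ← sum_dotProduct, ← mul_sum]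
  linarith [four_mul_dotProduct_le_sqnorm_add (∑ k ∈ S, A k *ᵥ u k) (∑ k ∈ T, A k *ᵥ v k)]

lemma blockLowerForm_le :
    blockLowerForm A u v ≤
      Nat.clog 2 K * (lamMaxBlock A / 4) * (∑ k, sqnorm (u k) + ∑ k, sqnorm (v k)) := by
  have hL : 0 ≤ lamMaxBlock A / 4 := div_nonneg (lamMaxBlock_nonneg A) zero_le_four
  have h := sum_sum_filter_lt_le_of_card_le_two_pow
    (fun k => mul_nonneg hL (sqnorm_nonneg (u k))) (fun k => mul_nonneg hL (sqnorm_nonneg (v k)))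
    (fun _ _ => sum_dotProduct_mulVec_le_of_disjoint A u v) (S := univ)
    (by simpa using Nat.le_pow_clog one_lt_two K)
  rwa [sum_add_distrib, ← mul_sum, ← mul_sum, ← mul_add, ← mul_assoc] at h

lemma sq_blockLowerForm_le :
    blockLowerForm A u v ^ 2 ≤
      (Nat.clog 2 K * lamMaxBlock A / 2) ^ 2 * ((∑ k, sqnorm (u k)) * ∑ k, sqnorm (v k)) := by
  set κ := Nat.clog 2 K * (lamMaxBlock A / 4) with hκ
  -- The bound for `t • v` is a quadratic inequality in `t`; its discriminant is the claim.
  have scaled (t : ℝ) : 0 ≤ κ * (∑ k, sqnorm (v k)) * (t * t) + -blockLowerForm A u v * t +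
      κ * ∑ k, sqnorm (u k) := by
    have h := blockLowerForm_le A u (t • v)
    simp only [blockLowerForm_smul_right, Pi.smul_apply, sqnorm_smul, ← mul_sum, ← hκ] at h
    linarith
  have h := discrim_le_zero scaled
  rw [discrim] at h
  calc blockLowerForm A u v ^ 2
      ≤ 4 * (κ * ∑ k, sqnorm (v k)) * (κ * ∑ k, sqnorm (u k)) := by linarith
    _ = _ := by rw [hκ]; ring

lemma sq_blockLowerForm_le_of_le_weight {P : Fin K → ℝ} {μ : ℝ} (hμ : 0 < μ)
    (hμP : ∀ k, μ ≤ P k) :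
    blockLowerForm A u v ^ 2 ≤
      Nat.clog 2 K ^ 2 * (lamMaxBlock A ^ 2 / μ) / 4 * (∑ k, sqnorm (u k)) *
        ∑ k, P k * sqnorm (v k) := by
  have unweighted : ∑ k, sqnorm (v k) ≤ (∑ k, P k * sqnorm (v k)) / μ := by
    rw [le_div_iff₀' hμ, mul_sum]
    exact sum_le_sum fun k _ => mul_le_mul_of_nonneg_right (hμP k) (sqnorm_nonneg _)
  have hu : 0 ≤ ∑ k, sqnorm (u k) := sum_nonneg fun k _ => sqnorm_nonneg _
  calc blockLowerForm A u v ^ 2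
      ≤ (Nat.clog 2 K * lamMaxBlock A / 2) ^ 2 *
          ((∑ k, sqnorm (u k)) * ((∑ k, P k * sqnorm (v k)) / μ)) :=
        (sq_blockLowerForm_le A u v).trans (by gcongr)
    _ = _ := by ring

end BlockLowerForm

section Cycle

open scoped Matrix

variable {K M N : ℕ} {A : Fin K → Matrix (Fin M) (Fin N) ℝ} {b : Fin M → ℝ} {P : Fin K → ℝ}
  {x y : Fin K → Fin N → ℝ}

/-- One cycle `x ↦ y` of cyclic BCGD on `g` with stepsize parameters `P_k`. -/
def IsBCGDStep (A : Fin K → Matrix (Fin M) (Fin N) ℝ) (b : Fin M → ℝ) (P : Fin K → ℝ)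
    (x y : Fin K → Fin N → ℝ) : Prop :=
  ∀ k, y k = x k - (P k)⁻¹ • gradk A b (wpt x y k) k

lemma resid_eq_resid_add (A : Fin K → Matrix (Fin M) (Fin N) ℝ) (b : Fin M → ℝ)
    (x y : Fin K → Fin N → ℝ) : resid A b y = resid A b x + ∑ k, A k *ᵥ (y k - x k) := by
  simp only [resid, Matrix.mulVec_sub, sum_sub_distrib]
  abel

lemma gq_eq_gq_add (A : Fin K → Matrix (Fin M) (Fin N) ℝ) (b : Fin M → ℝ)
    (x y : Fin K → Fin N → ℝ) :
    gq A b y = gq A b x + resid A b x ⬝ᵥ (∑ k, A k *ᵥ (y k - x k)) +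
      1 / 2 * sqnorm (∑ k, A k *ᵥ (y k - x k)) := by
  rw [gq, gq, resid_eq_resid_add A b x y, sqnorm_add]
  ring

lemma resid_wpt (A : Fin K → Matrix (Fin M) (Fin N) ℝ) (b : Fin M → ℝ)
    (x y : Fin K → Fin N → ℝ) (k : Fin K) :
    resid A b (wpt x y k) = resid A b x + ∑ j with j < k, A j *ᵥ (y j - x j) := by
  rw [resid_eq_resid_add A b x, sum_filter]
  congr 1
  refine sum_congr rfl fun j _ => ?_
  simp only [wpt]
  split_ifs <;> simp

lemma gradk_dotProduct (A : Fin K → Matrix (Fin M) (Fin N) ℝ) (b : Fin M → ℝ)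
    (x : Fin K → Fin N → ℝ) (k : Fin K) (v : Fin N → ℝ) :
    gradk A b x k ⬝ᵥ v = resid A b x ⬝ᵥ (A k *ᵥ v) := by
  rw [gradk, Matrix.mulVec_transpose, Matrix.dotProduct_mulVec]

namespace IsBCGDStep

lemma gradk_wpt (hstep : IsBCGDStep A b P x y) {k : Fin K} (hP : P k ≠ 0) :
    gradk A b (wpt x y k) k = -(P k • (y k - x k)) := by
  rw [hstep k, sub_sub_cancel_left, smul_neg, smul_inv_smul₀ hP, neg_neg]

lemma resid_dotProduct (hstep : IsBCGDStep A b P x y) (hP : ∀ k, P k ≠ 0)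
    (v : Fin K → Fin N → ℝ) :
    resid A b x ⬝ᵥ (∑ k, A k *ᵥ v k) =
      -∑ k, P k * ((y k - x k) ⬝ᵥ v k) - blockLowerForm A v (y - x) := by
  have block (k : Fin K) : resid A b x ⬝ᵥ (A k *ᵥ v k) =
      -(P k * ((y k - x k) ⬝ᵥ v k)) -
        ∑ j with j < k, (A k *ᵥ v k) ⬝ᵥ (A j *ᵥ (y j - x j)) := by
    have h := gradk_dotProduct A b (wpt x y k) k (v k)
    rw [hstep.gradk_wpt (hP k), resid_wpt, neg_dotProduct, smul_dotProduct, smul_eq_mul,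
      add_dotProduct, dotProduct_comm (∑ j with j < k, _), dotProduct_sum] at h
    linarith
  rw [dotProduct_sum, sum_congr rfl fun k _ => block k, sum_sub_distrib, sum_neg_distrib]
  rfl

lemma half_sum_mul_sqnorm_le (hstep : IsBCGDStep A b P x y) (hP : ∀ k, 0 < P k)
    (hAP : ∀ k, lamMaxQ (A k) ≤ P k) :
    1 / 2 * ∑ k, P k * sqnorm (y k - x k) ≤ gq A b x - gq A b y := by
  have diagonal : ∑ k, sqnorm (A k *ᵥ (y k - x k)) ≤ ∑ k, P k * sqnorm (y k - x k) :=
    sum_le_sum fun k _ => (sqnorm_mulVec_le_lamMaxQ_mul _ _).trans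
      (mul_le_mul_of_nonneg_right (hAP k) (sqnorm_nonneg _))
  have first_order := hstep.resid_dotProduct (fun k => (hP k).ne') (y - x)
  have second_order := sqnorm_sum_mulVec_eq_two_mul_blockLowerForm_add A (y - x)
  simp only [Pi.sub_apply, ← sqnorm_eq_dotProduct] at first_order second_order
  rw [gq_eq_gq_add A b x y]
  linarith

lemma gq_le (hstep : IsBCGDStep A b P x y) (hP : ∀ k, 0 < P k)
    (hAP : ∀ k, lamMaxQ (A k) ≤ P k) : gq A b y ≤ gq A b x := by
  have decrease := hstep.half_sum_mul_sqnorm_le hP hAP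
  have : 0 ≤ ∑ k, P k * sqnorm (y k - x k) :=
    sum_nonneg fun k _ => mul_nonneg (hP k).le (sqnorm_nonneg _)
  linarith

lemma gq_sub_gq_le (hstep : IsBCGDStep A b P x y) (hP : ∀ k, P k ≠ 0) (z : Fin K → Fin N → ℝ) :
    gq A b x - gq A b z ≤
      ∑ k, P k * ((z k - x k) ⬝ᵥ (y k - x k)) + blockLowerForm A (z - x) (y - x) := by
  have first_order := hstep.resid_dotProduct hP (z - x)
  have convexity := sqnorm_nonneg (∑ k, A k *ᵥ (z k - x k))
  simp only [Pi.sub_apply, dotProduct_comm (y _ - x _)] at first_order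
  rw [gq_eq_gq_add A b x z]
  linarith

lemma sq_gq_sub_gq_le (hstep : IsBCGDStep A b P x y) {μ ν : ℝ} (hμ : 0 < μ) (hν : 0 ≤ ν)
    (hμP : ∀ k, μ ≤ P k) (hPν : ∀ k, P k ≤ ν) (hAP : ∀ k, lamMaxQ (A k) ≤ P k)
    {z : Fin K → Fin N → ℝ} (hz : gq A b z ≤ gq A b x) :
    (gq A b x - gq A b z) ^ 2 ≤
      (4 * ν + Nat.clog 2 K ^ 2 * (lamMaxBlock A ^ 2 / μ)) * (∑ k, sqnorm (x k - z k)) *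
        (gq A b x - gq A b y) := by
  have hP (k) : 0 < P k := hμ.trans_le (hμP k)
  have diagonal := sq_sum_mul_dotProduct_le univ (fun k _ => (hP k).le) (fun k _ => hPν k)
    (z - x) (y - x)
  have triangular := sq_blockLowerForm_le_of_le_weight A (z - x) (y - x) hμ hμP
  have gap := hstep.gq_sub_gq_le (fun k => (hP k).ne') z
  have decrease := hstep.half_sum_mul_sqnorm_le hP hAP
  simp only [Pi.sub_apply, sqnorm_sub_comm (z _)] at diagonal triangular
  set D := ∑ k, sqnorm (x k - z k)
  set G := ∑ k, P k * sqnorm (y k - x k)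
  set Q := Nat.clog 2 K ^ 2 * (lamMaxBlock A ^ 2 / μ)
  have hD : 0 ≤ D := sum_nonneg fun k _ => sqnorm_nonneg _
  calc (gq A b x - gq A b z) ^ 2
      ≤ (∑ k, P k * ((z k - x k) ⬝ᵥ (y k - x k)) + blockLowerForm A (z - x) (y - x)) ^ 2 :=
        pow_le_pow_left₀ (sub_nonneg.2 hz) gap 2
    _ ≤ 2 * (ν * D * G + Q / 4 * D * G) := add_sq_le.trans (by gcongr)
    _ = (4 * ν + Q) * D * (1 / 2 * G) := by ring
    _ ≤ (4 * ν + Q) * D * (gq A b x - gq A b y) := by gcongr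

end IsBCGDStep

end Cycle

section Rate

lemma le_div_of_sq_le_mul_sub {D : ℕ → ℝ} (hD : Antitone D) {c : ℝ} (hc : 0 ≤ c)
    (h : ∀ r, 0 ≤ D r → D r ^ 2 ≤ c * (D r - D (r + 1))) {r : ℕ} (hr : 0 < r) :
    D r ≤ c / r := by
  have mul_le (r : ℕ) : r * D r ≤ c := by
    induction r with
    | zero => simpa using hc
    | succ r ih =>
      have decrease : D (r + 1) ≤ D r := hD r.le_succ
      rcases le_or_gt (D (r + 1)) 0 with hneg | hpos
      · exact (mul_nonpos_of_nonneg_of_nonpos (by positivity) hneg).trans hc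
      have hDr : 0 < D r := hpos.trans_le decrease
      have contraction : (c + D r) * D (r + 1) ≤ c * D r := by nlinarith [h r hDr.le]
      refine le_of_mul_le_mul_left ?_ (add_pos_of_nonneg_of_pos hc hDr)
      calc (c + D r) * (↑(r + 1) * D (r + 1))
          = (r + 1) * ((c + D r) * D (r + 1)) := by push_cast; ring
        _ ≤ (r + 1) * (c * D r) := by gcongr
        _ = c * (r * D r + D r) := by ring
        _ ≤ c * (c + D r) := by gcongr
        _ = (c + D r) * c := mul_comm _ _
  rw [le_div_iff₀' (by positivity)]
  exact mul_le r

variable {K : ℕ}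

lemma le_maxOf (hK : 1 ≤ K) (P : Fin K → ℝ) (k : Fin K) : P k ≤ maxOf hK P :=
  le_sup' P (mem_univ k)

lemma minOf_le (hK : 1 ≤ K) (P : Fin K → ℝ) (k : Fin K) : minOf hK P ≤ P k :=
  inf'_le P (mem_univ k)

lemma minOf_pos (hK : 1 ≤ K) {P : Fin K → ℝ} (hP : ∀ k, 0 < P k) : 0 < minOf hK P :=
  (lt_inf'_iff _).2 fun k _ => hP k

lemma minOf_le_maxOf (hK : 1 ≤ K) (P : Fin K → ℝ) : minOf hK P ≤ maxOf hK P :=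
  (minOf_le hK P ⟨0, hK⟩).trans (le_maxOf hK P ⟨0, hK⟩)

lemma clog_two_mul_log_two_le_log {n : ℕ} (hn : 1 ≤ n) :
    Nat.clog 2 n * Real.log 2 ≤ Real.log (2 * n) := by
  have hn' : (1 : ℝ) ≤ n := mod_cast hn
  have log_two_pos : 0 < Real.log 2 := Real.log_pos one_lt_two
  have ceil_lt := Nat.ceil_lt_add_one (Real.logb_nonneg one_lt_two hn')
  rw [← Nat.cast_two, Real.natCeil_logb_natCast, Nat.cast_two] at ceil_lt
  rw [Real.log_mul two_ne_zero (by positivity), ← le_div_iff₀ log_two_pos, add_div,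
    div_self log_two_pos.ne', add_comm]
  exact ceil_lt.le

lemma four_mul_add_clog_sq_mul_le {N : ℕ} (hK : 1 ≤ K) (hN : 1 ≤ N) {μ ν L : ℝ} (hμ : 0 < μ)
    (hμν : μ ≤ ν) (hνL : ν ≤ L) :
    4 * ν + Nat.clog 2 K ^ 2 * (L ^ 2 / μ) ≤
      3 * (2 * Real.log (2 * N * K) ^ 2 * (ν + L ^ 2 / μ)) := by
  set c := Real.log (2 * N * K)
  have hK' : (1 : ℝ) ≤ K := mod_cast hK
  have hN' : (1 : ℝ) ≤ N := mod_cast hN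
  have two_thirds_le : 2 / 3 ≤ Real.log 2 := by linarith [Real.log_two_gt_d9]
  have log_two_le : Real.log 2 ≤ c := Real.log_le_log two_pos (by nlinarith)
  have clog_mul_le : Nat.clog 2 K * Real.log 2 ≤ c :=
    (clog_two_mul_log_two_le_log hK).trans (Real.log_le_log (by positivity) (by nlinarith))
  have clog_le : (Nat.clog 2 K : ℝ) ≤ 3 / 2 * c := by
    have : Nat.clog 2 K * (2 / 3 : ℝ) ≤ Nat.clog 2 K * Real.log 2 := by gcongr
    linarith
  have hν : 0 < ν := hμ.trans_le hμν
  -- `4 ≤ 6 c²` fails for `N = K = 1`; the slack in the second term, which exceeds `ν`, covers it.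
  have le_ratio : ν ≤ L ^ 2 / μ := by
    rw [le_div_iff₀ hμ, sq]
    exact mul_le_mul hνL (hμν.trans hνL) hμ.le (hν.le.trans hνL)
  have le_c_sq : 4 / 9 ≤ c ^ 2 := by nlinarith
  have c_sq_mul_le := mul_le_mul_of_nonneg_left le_ratio (sq_nonneg c)
  have c_sq_mul_nonneg := mul_nonneg (sq_nonneg c) hν.le
  calc 4 * ν + Nat.clog 2 K ^ 2 * (L ^ 2 / μ)
      ≤ 4 * ν + (3 / 2 * c) ^ 2 * (L ^ 2 / μ) := by gcongr
    _ = 9 * (4 / 9 * ν) + 9 / 4 * c ^ 2 * (L ^ 2 / μ) := by ring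
    _ ≤ 9 * (c ^ 2 * ν) + 9 / 4 * c ^ 2 * (L ^ 2 / μ) := by gcongr
    _ ≤ 3 * (2 * c ^ 2 * (ν + L ^ 2 / μ)) := by linarith

end Rate

theorem bcgd_rate_smooth_unconstrained_general {K M N : ℕ} (hK : 1 ≤ K)
    (A : Fin K → Matrix (Fin M) (Fin N) ℝ) (b : Fin M → ℝ) {P : Fin K → ℝ}
    (hP : ∀ k, 0 < P k) (hAP : ∀ k, lamMaxQ (A k) ≤ P k) {x : ℕ → Fin K → Fin N → ℝ}
    (hstep : ∀ r, IsBCGDStep A b P (x r) (x (r + 1))) {z : Fin K → Fin N → ℝ} {R : ℝ}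
    (hR : ∀ r, ∑ k, sqnorm (x r k - z k) ≤ R ^ 2) (r : ℕ) :
    gq A b (x (r + 1)) - gq A b z ≤
      (4 * maxOf hK P + Nat.clog 2 K ^ 2 * (lamMaxBlock A ^ 2 / minOf hK P)) * R ^ 2 / (r + 1) := by
  have hmin : 0 < minOf hK P := minOf_pos hK hP
  have hmax : 0 < maxOf hK P := hmin.trans_le (minOf_le_maxOf hK P)
  have decrease (r) : gq A b (x (r + 1)) ≤ gq A b (x r) := (hstep r).gq_le hP hAP
  have rate := le_div_of_sq_le_mul_sub (D := fun r => gq A b (x r) - gq A b z)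
    (c := (4 * maxOf hK P + Nat.clog 2 K ^ 2 * (lamMaxBlock A ^ 2 / minOf hK P)) * R ^ 2)
    (antitone_nat_of_succ_le fun r => sub_le_sub_right (decrease r) _) (by positivity)
    (fun r hr => ?_) r.succ_pos
  · exact mod_cast rate
  rw [sub_sub_sub_cancel_right]
  have := sub_nonneg.2 (decrease r)
  have := hR r
  exact ((hstep r).sq_gq_sub_gq_le hmin hmax.le (minOf_le hK P) (le_maxOf hK P) hAP
    (sub_nonneg.1 hr)).trans (by gcongr)

/-- Theorem 1, smooth unconstrained case: cyclic BCGD with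
stepsizes `P_k = L_k` on `f(x) = (1/2)‖Σ_k A_k x_k − b‖²` satisfies
`Δ^{(r+1)} ≤ 3 max{L, 2 log²(2NK)(L_max + L²/L_min)} R_0²/(r+1)`. -/
theorem bcgd_rate_smooth_unconstrained {K M N : ℕ} (hK : 1 ≤ K) (hM : 1 ≤ M) (hN : 1 ≤ N)
    (hNK : 3 ≤ N * K)
    (A : Fin K → Matrix (Fin M) (Fin N) ℝ) (hA : ∀ k, A k ≠ 0) (b : Fin M → ℝ)
    (x : ℕ → Fin K → Fin N → ℝ)
    (hstep : ∀ (r : ℕ) (k : Fin K),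
      x (r + 1) k = x r k -
        (lamMaxQ (A k))⁻¹ • gradk A b (wpt (x r) (x (r + 1)) k) k)
    (xstar : Fin K → Fin N → ℝ)
    (hxstar : ∀ y : Fin K → Fin N → ℝ, gq A b xstar ≤ gq A b y)
    (R0 : ℝ)
    (hR0 : ∀ z : Fin K → Fin N → ℝ, gq A b z ≤ gq A b (x 0) →
      ∀ y : Fin K → Fin N → ℝ, (∀ z' : Fin K → Fin N → ℝ, gq A b y ≤ gq A b z') →
        Real.sqrt (∑ k, sqnorm (z k - y k)) ≤ R0)
    (r : ℕ) :
    gq A b (x (r + 1)) - gq A b xstar ≤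
      3 * max (lamMaxBlock A)
          (2 * Real.log (2 * (N : ℝ) * (K : ℝ)) ^ 2 *
            (maxOf hK (fun k => lamMaxQ (A k)) +
              lamMaxBlock A ^ 2 / minOf hK (fun k => lamMaxQ (A k)))) *
        R0 ^ 2 / (r + 1) := by
  have hL (k) : 0 < lamMaxQ (A k) := lamMaxQ_pos (hA k)
  have hanti : Antitone fun s => gq A b (x s) :=
    antitone_nat_of_succ_le fun s => IsBCGDStep.gq_le (hstep s) hL fun _ => le_rfl
  refine (bcgd_rate_smooth_unconstrained_general hK A b hL (fun _ => le_rfl) hstep (fun s =>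
    (Real.sqrt_le_iff.1 (hR0 (x s) (hanti s.zero_le) xstar hxstar)).2) r).trans ?_
  gcongr
  exact (four_mul_add_clog_sq_mul_le hK hN (minOf_pos hK hL) (minOf_le_maxOf hK _)
    (sup'_le _ _ fun k _ => lamMaxQ_le_lamMaxBlock A k)).trans (by gcongr; exact le_max_right _ _)
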